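/- Let F_q be a finite field with q ≥ n + k − 1 elements, and form the matrix A over the polynomial ring F_q[X_1,…,X_n]. Suppose det(A) is not the zero polynomial. Then there exist pairwise distinct elements α*_1,…,α*_n ∈ F_q such that the k×n matrix G over F_q defined by G_{i,j} = f_i(α*_j) = ∏_{t∈Z_i}(α*_j − α*_t) generates an [n,k] MDS code, i.e., every set of k columns of G is linearly independent. Moreover, G_{i,j} = 0 if and only if j ∈ Z_i. -/

import Mathlib

/-!
The columns of the generator matrix are `A(α)` applied to the Vandermonde vectors
`(1, α_j, …, α_j ^ (k - 1))`. Any `k` of these are independent when the `α_j` are distinct, so it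
suffices to find distinct points at which `det A` does not vanish, that is, a point of `F ^ n`
outside the zero set of `det A * V`, where `V` is the Vandermonde determinant of the indeterminates.

By the coordinatewise form of the Schwartz–Zippel lemma this is possible once the degree of
`det A * V` in each `X_t` is less than the number of elements of `F`. The degree of `V` is at most
`n - 1`. Only the rows with `t ∈ Z i` involve `X_t`, and they do so linearly, so the degree of
`det A` is at most the number of such rows. Not every row is among them: otherwise every `f_i`
would vanish at `X_t`, and `A` would kill the nonzero vector of powers of `X_t`.
-/

open Polynomial MvPolynomial

/-- The coefficient matrix `A = (a_{i,j})` where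
`f_i(x) = ∏_{t ∈ Z i} (x - X_t) = ∑_{j=1}^k a_{i,j} x^{j-1}`
(with `0`-based index `j`, `a i j` is the coefficient of `x^j` in `f i`). -/
noncomputable def coeffMatrix (F : Type*) [Field F] (n k : ℕ)
    (Z : Fin k → Finset (Fin n)) : Matrix (Fin k) (Fin k) (MvPolynomial (Fin n) F) :=
  Matrix.of fun i j =>
    (∏ t ∈ Z i, (Polynomial.X - Polynomial.C (MvPolynomial.X t) :
        Polynomial (MvPolynomial (Fin n) F))).coeff (j : ℕ)

section PolyCoeffMatrix

variable {R κ : Type*} [Semiring R] {k : ℕ}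

/-- The matrix whose `i`-th row lists the coefficients of `1, x, …, x ^ (k - 1)` in `p i`, so that
`coeffMatrix` is the case of the polynomials `∏ t ∈ Z i, (x - X_t)`. Coefficients of degree at
least `k` are cut off. -/
def polyCoeffMatrix (k : ℕ) (p : κ → R[X]) : Matrix κ (Fin k) R :=
  Matrix.of fun i j => (p i).coeff j

lemma polyCoeffMatrix_map {S : Type*} [Semiring S] (f : R →+* S) (p : κ → R[X]) :
    (polyCoeffMatrix k p).map f = polyCoeffMatrix k fun i => (p i).map f := by
  ext i j
  simp [polyCoeffMatrix]

lemma polyCoeffMatrix_mulVec_pow {p : κ → R[X]} (hp : ∀ i, (p i).natDegree < k) (x : R) :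
    (polyCoeffMatrix k p).mulVec (fun j => x ^ (j : ℕ)) = fun i => (p i).eval x := by
  ext i
  rw [Polynomial.eval_eq_sum_range' (hp i), ← Fin.sum_univ_eq_sum_range]
  rfl

end PolyCoeffMatrix

section Domain

variable {R ι κ : Type*} [CommRing R] [IsDomain R] {k : ℕ}

lemma exists_eval_ne_zero_of_det_polyCoeffMatrix_ne_zero (hk : 0 < k) {p : Fin k → R[X]}
    (hp : ∀ i, (p i).natDegree < k) (hdet : (polyCoeffMatrix k p).det ≠ 0) (x : R) :
    ∃ i, (p i).eval x ≠ 0 := by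
  by_contra! hroot
  have hker : (polyCoeffMatrix k p).mulVec (fun j => x ^ (j : ℕ)) = 0 :=
    (polyCoeffMatrix_mulVec_pow hp x).trans (funext hroot)
  simpa using congrFun (Matrix.eq_zero_of_mulVec_eq_zero hdet hker) ⟨0, hk⟩

lemma linearIndependent_pow_of_injective [Fintype κ] (hκ : Fintype.card κ = k) {x : κ → R}
    (hx : Function.Injective x) :
    LinearIndependent R fun (j : κ) (l : Fin k) => x j ^ (l : ℕ) := by
  let e : Fin k ≃ κ := (Fintype.equivFinOfCardEq hκ).symm
  have hV : (Matrix.vandermonde (x ∘ e)).det ≠ 0 :=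
    Matrix.det_vandermonde_ne_zero_iff.2 (hx.comp e.injective)
  exact (linearIndependent_equiv e).1 (Matrix.linearIndependent_rows_of_det_ne_zero hV)

lemma linearIndependent_eval_of_det_polyCoeffMatrix_ne_zero [Fintype κ]
    (hκ : Fintype.card κ = k) {p : Fin k → R[X]} (hp : ∀ i, (p i).natDegree < k)
    (hdet : (polyCoeffMatrix k p).det ≠ 0) {x : κ → R} (hx : Function.Injective x) :
    LinearIndependent R fun (j : κ) (i : Fin k) => (p i).eval (x j) := by
  have hker : LinearMap.ker (polyCoeffMatrix k p).mulVecLin = ⊥ :=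
    LinearMap.ker_eq_bot'.2 fun _ hv => Matrix.eq_zero_of_mulVec_eq_zero hdet hv
  simpa only [Function.comp_def, Matrix.mulVecLin_apply, polyCoeffMatrix_mulVec_pow hp] using
    (linearIndependent_pow_of_injective hκ hx).map' _ hker

lemma card_filter_mem_lt_of_det_polyCoeffMatrix_ne_zero [DecidableEq ι] (hk : 0 < k)
    {Z : Fin k → Finset ι} (hZ : ∀ i, (Z i).card < k) {c : ι → R}
    (hdet : (polyCoeffMatrix k fun i =>
      ∏ t ∈ Z i, (Polynomial.X - Polynomial.C (c t))).det ≠ 0) (t : ι) :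
    (Finset.univ.filter fun i => t ∈ Z i).card < k := by
  obtain ⟨i, hi⟩ := exists_eval_ne_zero_of_det_polyCoeffMatrix_ne_zero hk
    (fun i => by simpa using hZ i) hdet (c t)
  have hti : t ∉ Z i := fun ht => hi <| by
    rw [Polynomial.eval_prod]
    exact Finset.prod_eq_zero ht (by simp)
  simpa using Finset.card_lt_card (Finset.filter_ssubset.2 ⟨i, Finset.mem_univ i, hti⟩)

end Domain

section DegreeOf

variable {R σ ι : Type*}

lemma degreeOf_det_le [CommRing R] [Fintype ι] [DecidableEq ι] {t : σ}
    {M : Matrix ι ι (MvPolynomial σ R)} {b : ι → ℕ} (hM : ∀ i j, degreeOf t (M i j) ≤ b i) :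
    degreeOf t M.det ≤ ∑ i, b i := by
  rw [← Matrix.det_transpose, Matrix.det_apply]
  refine (degreeOf_sum_le _ _ _).trans (Finset.sup_le fun τ _ => ?_)
  have hprod : degreeOf t (∏ i, M.transpose (τ i) i) ≤ ∑ i, b i :=
    (degreeOf_prod_le _ _ _).trans (Finset.sum_le_sum fun i _ => hM _ _)
  rcases Int.units_eq_one_or (Equiv.Perm.sign τ) with hτ | hτ
  · simpa [hτ] using hprod
  · simpa [hτ, degreeOf_neg] using hprod

lemma degreeOf_coeff_prod_le [CommSemiring R] {t : σ} {s : Finset ι}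
    {p : ι → (MvPolynomial σ R)[X]} {b : ι → ℕ}
    (hp : ∀ u ∈ s, ∀ j, degreeOf t ((p u).coeff j) ≤ b u) (j : ℕ) :
    degreeOf t ((∏ u ∈ s, p u).coeff j) ≤ ∑ u ∈ s, b u := by
  classical
  induction s using Finset.induction_on generalizing j with
  | empty =>
    rw [Finset.prod_empty, Polynomial.coeff_one]
    split_ifs <;> simp
  | insert a s ha ih =>
    rw [Finset.forall_mem_insert] at hp
    rw [Finset.prod_insert ha, Finset.sum_insert ha, Polynomial.coeff_mul]
    exact (degreeOf_sum_le _ _ _).trans <| Finset.sup_le fun ij _ =>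
      (degreeOf_mul_le _ _ _).trans (add_le_add (hp.1 _) (ih hp.2 _))

variable [CommRing R] [Nontrivial R]

lemma degreeOf_coeff_X_sub_C_X_le [DecidableEq σ] (t u : σ) (j : ℕ) :
    degreeOf t ((Polynomial.X - Polynomial.C (MvPolynomial.X u : MvPolynomial σ R)).coeff j) ≤
      if t = u then 1 else 0 := by
  rw [Polynomial.coeff_sub, Polynomial.coeff_X, Polynomial.coeff_C, ← degreeOf_X (R := R)]
  refine (degreeOf_sub_le _ _ _).trans (max_le ?_ ?_) <;> split_ifs <;> simp

lemma degreeOf_det_polyCoeffMatrix_prod_X_sub_C_X_le [DecidableEq σ] {k : ℕ}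
    (Z : Fin k → Finset σ) (t : σ) :
    degreeOf t (polyCoeffMatrix k fun i => ∏ u ∈ Z i,
        (Polynomial.X - Polynomial.C (MvPolynomial.X u : MvPolynomial σ R))).det ≤
      (Finset.univ.filter fun i => t ∈ Z i).card := by
  have hrow (i j : Fin k) := degreeOf_coeff_prod_le (s := Z i)
    (fun u _ => degreeOf_coeff_X_sub_C_X_le (R := R) t u) j
  exact (degreeOf_det_le hrow).trans_eq (by simp)

lemma degreeOf_det_vandermonde_X_le {n : ℕ} {v : Fin n → σ} (hv : Function.Injective v) (t : σ) :
    degreeOf t (Matrix.vandermonde fun i => (MvPolynomial.X (v i) : MvPolynomial σ R)).det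
      ≤ n - 1 := by
  classical
  have hentry (i j : Fin n) : degreeOf t
      (Matrix.vandermonde (fun i => (MvPolynomial.X (v i) : MvPolynomial σ R)) i j) ≤
        if t = v i then n - 1 else 0 := by
    refine (degreeOf_pow_le _ _ _).trans ?_
    rw [degreeOf_X]
    split_ifs
    · omega
    · simp
  refine (degreeOf_det_le hentry).trans ?_
  by_cases ht : ∃ i, v i = t
  · obtain ⟨i, rfl⟩ := ht
    simp [hv.eq_iff]
  · simp [fun i => Ne.symm (not_exists.1 ht i)]

end DegreeOf

section EvaluationPoints

variable {R ι : Type*} [CommRing R] [IsDomain R] [Fintype ι]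

lemma exists_injective_eval_ne_zero {P : MvPolynomial ι R} (hP : P ≠ 0) (S : ι → Finset R)
    (hS : ∀ t, Fintype.card ι + degreeOf t P ≤ (S t).card) :
    ∃ α : ι → R, (∀ t, α t ∈ S t) ∧ Function.Injective α ∧ MvPolynomial.eval α P ≠ 0 := by
  let e : Fin (Fintype.card ι) ≃ ι := (Fintype.equivFin ι).symm
  let V := (Matrix.vandermonde fun i => (MvPolynomial.X (e i) : MvPolynomial ι R)).det
  have hV : V ≠ 0 :=
    Matrix.det_vandermonde_ne_zero_iff.2 (MvPolynomial.X_injective.comp e.injective)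
  have hdeg (t : ι) : degreeOf t (P * V) < (S t).card := by
    have hVt : degreeOf t V ≤ Fintype.card ι - 1 := degreeOf_det_vandermonde_X_le e.injective t
    have hmul := degreeOf_mul_le t P V
    have hι : 0 < Fintype.card ι := Fintype.card_pos_iff.2 ⟨t⟩
    have hSt := hS t
    omega
  obtain ⟨α, hαS, hα⟩ : ∃ α : ι → R, (∀ t, α t ∈ S t) ∧ MvPolynomial.eval α (P * V) ≠ 0 := by
    by_contra! hzero
    exact mul_ne_zero hP hV (eq_zero_of_eval_zero_at_prod_finset _ S hdeg hzero)
  rw [map_mul] at hα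
  have hVα : MvPolynomial.eval α V = (Matrix.vandermonde (α ∘ e)).det := by
    simp [V, Matrix.det_vandermonde]
  have hinj : Function.Injective (α ∘ e) :=
    Matrix.det_vandermonde_ne_zero_iff.1 (hVα ▸ right_ne_zero_of_mul hα)
  exact ⟨α, hαS, (e.injective_comp α).1 hinj, left_ne_zero_of_mul hα⟩

theorem exists_evaluation_points_general [DecidableEq ι] {k : ℕ} (Z : Fin k → Finset ι)
    (hZ : ∀ i, (Z i).card < k) (S : ι → Finset R)
    (hS : ∀ t, Fintype.card ι + (Finset.univ.filter fun i => t ∈ Z i).card ≤ (S t).card)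
    (hdet : (polyCoeffMatrix k fun i => ∏ t ∈ Z i,
      (Polynomial.X - Polynomial.C (MvPolynomial.X t : MvPolynomial ι R))).det ≠ 0) :
    ∃ α : ι → R, (∀ t, α t ∈ S t) ∧ Function.Injective α ∧
      (∀ s : Finset ι, s.card = k →
        LinearIndependent R fun (j : s) (i : Fin k) => ∏ t ∈ Z i, (α j - α t)) ∧
      ∀ i j, ∏ t ∈ Z i, (α j - α t) = 0 ↔ j ∈ Z i := by
  obtain ⟨α, hαS, hα, hAα⟩ := exists_injective_eval_ne_zero hdet S fun t =>
    (Nat.add_le_add_left (degreeOf_det_polyCoeffMatrix_prod_X_sub_C_X_le Z t) _).trans (hS t)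
  refine ⟨α, hαS, hα, fun s hs => ?_, fun i j => ?_⟩
  · have hdetα : (polyCoeffMatrix k fun i =>
        ∏ t ∈ Z i, (Polynomial.X - Polynomial.C (α t))).det ≠ 0 := by
      rw [RingHom.map_det, RingHom.mapMatrix_apply, polyCoeffMatrix_map] at hAα
      simpa [Polynomial.map_prod] using hAα
    simpa [Polynomial.eval_prod] using linearIndependent_eval_of_det_polyCoeffMatrix_ne_zero
      ((Fintype.card_coe s).trans hs) (fun i => by simpa using hZ i) hdetα
      (hα.comp Subtype.val_injective)
  · simp [Finset.prod_eq_zero_iff, sub_eq_zero, hα.eq_iff]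

end EvaluationPoints

/-- If `det A` is not the zero polynomial and `q ≥ n + k - 1`, then there exist pairwise
distinct evaluation points `α*_1, …, α*_n ∈ F_q` such that the matrix
`G_{i,j} = ∏_{t ∈ Z i} (α*_j - α*_t)` generates an `[n,k]` MDS code and has support
exactly the complement of the `Z i`'s. -/
theorem exists_evaluation_points (F : Type*) [Field F] [Fintype F] (n k : ℕ)
    (hk : 1 ≤ k) (hkn : k ≤ n) (hq : n + k - 1 ≤ Fintype.card F)
    (Z : Fin k → Finset (Fin n)) (hZ : ∀ i, (Z i).card = k - 1)
    (hdet : (coeffMatrix F n k Z).det ≠ 0) :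
    ∃ α : Fin n → F, Function.Injective α ∧
      (∀ s : Finset (Fin n), s.card = k →
        LinearIndependent F (fun j : s =>
          (fun i : Fin k => ∏ t ∈ Z i, (α (j : Fin n) - α t)))) ∧
      (∀ i : Fin k, ∀ j : Fin n, (∏ t ∈ Z i, (α j - α t)) = 0 ↔ j ∈ Z i) := by
  have hZk (i : Fin k) : (Z i).card < k := by have := hZ i; omega
  have hcard (t : Fin n) : Fintype.card (Fin n) + (Finset.univ.filter fun i => t ∈ Z i).card ≤
      (Finset.univ : Finset F).card := by
    have hZt := card_filter_mem_lt_of_det_polyCoeffMatrix_ne_zero hk hZk hdet t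
    rw [Finset.card_univ, Fintype.card_fin]
    omega
  obtain ⟨α, -, hα⟩ := exists_evaluation_points_general Z hZk (fun _ => Finset.univ) hcard hdet
  exact ⟨α, hα⟩
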